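/- For every integer d ≥ 3 and every real number c, there exists a probability distribution on R whose d-th cumulant equals c. Consequently, for d ≥ 3, every symmetric tensor T ∈ S^d(R^n) arises as the d-th cumulant tensor of some R^n-valued random vector. -/

import Mathlib

open MeasureTheory

/-- The `d`-th cumulant of a probability distribution `μ` on `ℝ`: the `d`-th derivative at
`0` of the cumulant generating function `t ↦ log ∫ e^{t x} dμ(x)`. -/
noncomputable def cumulant1 (d : ℕ) (μ : Measure ℝ) : ℝ :=
  iteratedDeriv d (fun t => Real.log (∫ x, Real.exp (t * x) ∂μ)) 0

/-- The `d`-th cumulant tensor of a probability distribution `μ` on `ℝ^n`: mixed partial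
derivatives at `0` of `t ↦ log ∫ e^{⟨t, x⟩} dμ(x)`. -/
noncomputable def cumulantTensor (d n : ℕ) (μ : Measure (Fin n → ℝ)) :
    (Fin d → Fin n) → ℝ :=
  fun i => iteratedFDeriv ℝ d
    (fun t : Fin n → ℝ => Real.log (∫ x, Real.exp (∑ j, t j * x j) ∂μ)) 0
    (fun k => Pi.single (i k) (1 : ℝ))

open Polynomial in
/-- cumulant polynomials of the Bernoulli family; `kpoly m` is the `(m+1)`-st cumulant -/
noncomputable def kpoly : ℕ → ℝ[X]
  | 0 => X
  | (m+1) => X * (1 - X) * derivative (kpoly m)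

lemma kpoly_eval_zero (m : ℕ) : (kpoly m).eval 0 = 0 := by
  cases m <;> simp [kpoly]

lemma kpoly_eval_one (m : ℕ) : (kpoly (m+1)).eval 1 = 0 := by
  simp [kpoly]

open Polynomial in
lemma kpoly_ne_zero (m : ℕ) : kpoly m ≠ 0 := by
  induction m with
  | zero => simp [kpoly]
  | succ m ih =>
    intro h
    simp only [kpoly, mul_eq_zero] at h
    rcases h with (h | h) | h
    · exact X_ne_zero h
    · have := congrArg (eval 0) h
      simp at this
    · have h2 := derivative_eq_zero.1 h
      rw [eq_C_of_natDegree_eq_zero h2] at ih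
      have h3 := kpoly_eval_zero m
      rw [eq_C_of_natDegree_eq_zero h2] at h3
      simp at h3
      simp [h3] at ih

open Polynomial in
lemma exists_deriv_neg (P : ℝ[X]) (hP : P ≠ 0) (h0 : P.eval 0 = 0) (h1 : P.eval 1 = 0) :
    ∃ p ∈ Set.Ioo (0:ℝ) 1, (derivative P).eval p < 0 := by
  by_contra! hcon
  have hm : MonotoneOn (fun x => P.eval x) (Set.Icc (0:ℝ) 1) := by
    apply monotoneOn_of_deriv_nonneg (convex_Icc 0 1) P.continuous.continuousOn
      P.differentiable.differentiableOn
    intro x hx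
    rw [interior_Icc] at hx
    simpa using hcon x hx
  apply hP
  apply Polynomial.eq_zero_of_infinite_isRoot
  apply (Set.Icc_infinite (zero_lt_one' ℝ)).mono
  intro x hx
  have a := hm (Set.left_mem_Icc.2 zero_le_one) hx hx.1
  have b := hm hx (Set.right_mem_Icc.2 zero_le_one) hx.2
  simp only [h0, h1] at a b
  exact le_antisymm b a

lemma exists_kpoly_neg (m : ℕ) :
    ∃ p ∈ Set.Ioo (0:ℝ) 1, (kpoly (m+2)).eval p < 0 := by
  obtain ⟨p, hp, h⟩ := exists_deriv_neg (kpoly (m+1)) (kpoly_ne_zero _) (kpoly_eval_zero _)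
    (kpoly_eval_one _)
  refine ⟨p, hp, ?_⟩
  rw [kpoly]
  simp only [Polynomial.eval_mul, Polynomial.eval_X, Polynomial.eval_sub, Polynomial.eval_one]
  exact mul_neg_of_pos_of_neg (mul_pos hp.1 (sub_pos.2 hp.2)) h

lemma exists_kpoly_pos (m : ℕ) :
    ∃ p ∈ Set.Ioo (0:ℝ) 1, 0 < (kpoly (m+2)).eval p := by
  obtain ⟨p, hp, h⟩ := exists_deriv_neg (-kpoly (m+1)) (neg_ne_zero.2 (kpoly_ne_zero _))
    (by simp [kpoly_eval_zero]) (by simp [kpoly_eval_one])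
  refine ⟨p, hp, ?_⟩
  rw [kpoly]
  simp only [Polynomial.eval_mul, Polynomial.eval_X, Polynomial.eval_sub, Polynomial.eval_one]
  refine mul_pos (mul_pos hp.1 (sub_pos.2 hp.2)) ?_
  simpa using h

lemma exists_scaled (m : ℕ) (a : ℝ) :
    ∃ p ∈ Set.Ioo (0:ℝ) 1, ∃ α : ℝ, α ^ (m+3) * (kpoly (m+2)).eval p = a := by
  have key : ∀ p ∈ Set.Ioo (0:ℝ) 1, 0 < a / (kpoly (m+2)).eval p →
      ∃ p ∈ Set.Ioo (0:ℝ) 1, ∃ α : ℝ, α ^ (m+3) * (kpoly (m+2)).eval p = a := by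
    intro p hp h
    refine ⟨p, hp, (a / (kpoly (m+2)).eval p) ^ ((1:ℝ) / (m+3:ℕ)), ?_⟩
    rw [← Real.rpow_natCast, ← Real.rpow_mul h.le, one_div, inv_mul_cancel₀ (by positivity),
      Real.rpow_one]
    apply div_mul_cancel₀
    intro h0
    simp [h0] at h
  obtain ⟨p, hp, h⟩ := exists_kpoly_neg m
  obtain ⟨q, hq, h'⟩ := exists_kpoly_pos m
  rcases lt_trichotomy a 0 with ha | ha | ha
  · exact key p hp (div_pos_of_neg_of_neg ha h)
  · exact ⟨p, hp, 0, by simp [ha]⟩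
  · exact key q hq (div_pos ha h')

/-- Bernoulli cumulant generating function -/
noncomputable def bcgf (p : ℝ) (t : ℝ) : ℝ := Real.log ((1 - p) + p * Real.exp t)

lemma bden_pos {p : ℝ} (hp : p ∈ Set.Ioo (0:ℝ) 1) (t : ℝ) : 0 < (1 - p) + p * Real.exp t :=
  add_pos (sub_pos.2 hp.2) (mul_pos hp.1 (Real.exp_pos t))

lemma bcgf_iteratedDeriv {p : ℝ} (hp : p ∈ Set.Ioo (0:ℝ) 1) (m : ℕ) :
    iteratedDeriv (m+1) (bcgf p) =
      fun t => (kpoly m).eval (p * Real.exp t / ((1 - p) + p * Real.exp t)) := by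
  have hd : ∀ t, HasDerivAt (fun t => (1 - p) + p * Real.exp t) (p * Real.exp t) t := fun t =>
    ((Real.hasDerivAt_exp t).const_mul p).const_add (1 - p)
  induction m with
  | zero =>
    ext t
    rw [zero_add, iteratedDeriv_one]
    refine ((hd t).log (bden_pos hp t).ne').deriv.trans ?_
    simp [kpoly]
  | succ m ih =>
    ext t
    rw [iteratedDeriv_succ, ih]
    have h1 := (((Real.hasDerivAt_exp t).const_mul p).div (hd t) (bden_pos hp t).ne')
    have h2 := ((kpoly m).hasDerivAt (p * Real.exp t / ((1 - p) + p * Real.exp t))).comp t h1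
    refine h2.deriv.trans ?_
    have := (bden_pos hp t).ne'
    rw [kpoly]
    simp only [Polynomial.eval_mul, Polynomial.eval_X, Polynomial.eval_sub, Polynomial.eval_one]
    field_simp

lemma bcgf_iteratedDeriv_zero {p : ℝ} (hp : p ∈ Set.Ioo (0:ℝ) 1) (m : ℕ) :
    iteratedDeriv (m+1) (bcgf p) 0 = (kpoly m).eval p := by
  rw [bcgf_iteratedDeriv hp]; simp

lemma bcgf_contDiff {p : ℝ} (hp : p ∈ Set.Ioo (0:ℝ) 1) (k : ℕ) : ContDiff ℝ k (bcgf p) := by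
  unfold bcgf
  exact ContDiff.log (by fun_prop) (fun t => (bden_pos hp t).ne')

/-- Two-point measure -/
noncomputable def twoPt {E : Type*} [MeasurableSpace E] [Zero E] (p : ℝ) (w : E) : Measure E :=
  ENNReal.ofReal (1 - p) • Measure.dirac 0 + ENNReal.ofReal p • Measure.dirac w

lemma twoPt_prob {E : Type*} [MeasurableSpace E] [Zero E] {p : ℝ} (hp : p ∈ Set.Ioo (0:ℝ) 1)
    (w : E) : IsProbabilityMeasure (twoPt p w) := by
  constructor
  simp only [twoPt, Measure.add_apply, Measure.smul_apply, measure_univ, smul_eq_mul, mul_one]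
  rw [← ENNReal.ofReal_add (sub_pos.2 hp.2).le hp.1.le]
  simp

lemma twoPt_integral {E : Type*} [MeasurableSpace E] [MeasurableSingletonClass E] [Zero E] {p : ℝ}
    (hp : p ∈ Set.Ioo (0:ℝ) 1) (w : E) (f : E → ℝ) :
    ∫ x, f x ∂(twoPt p w) = (1 - p) * f 0 + p * f w := by
  rw [twoPt, integral_add_measure, integral_smul_measure, integral_smul_measure,
    integral_dirac, integral_dirac, ENNReal.toReal_ofReal (sub_pos.2 hp.2).le,
    ENNReal.toReal_ofReal hp.1.le]
  · simp
  · exact (integrable_dirac (by simp)).smul_measure (by simp)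
  · exact (integrable_dirac (by simp)).smul_measure (by simp)

/-- realizable tensors -/
def Realiz (d n : ℕ) (T : (Fin d → Fin n) → ℝ) : Prop :=
  ∃ μ : Measure (Fin n → ℝ), IsProbabilityMeasure μ ∧
    (∀ t : Fin n → ℝ, 0 < ∫ x, Real.exp (∑ j, t j * x j) ∂μ) ∧
    ContDiff ℝ d (fun t : Fin n → ℝ => Real.log (∫ x, Real.exp (∑ j, t j * x j) ∂μ)) ∧
    cumulantTensor d n μ = T

lemma Realiz.add {d n : ℕ} {S T : (Fin d → Fin n) → ℝ} (hS : Realiz d n S) (hT : Realiz d n T) :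
    Realiz d n (S + T) := by
  obtain ⟨μ, hμ, pμ, cμ, rfl⟩ := hS
  obtain ⟨ν, hν, pν, cν, rfl⟩ := hT
  have hmeas : Measurable (fun z : (Fin n → ℝ) × (Fin n → ℝ) => z.1 + z.2) := by fun_prop
  have hM : ∀ t : Fin n → ℝ, ∫ x, Real.exp (∑ j, t j * x j)
      ∂((μ.prod ν).map (fun z => z.1 + z.2)) =
      (∫ x, Real.exp (∑ j, t j * x j) ∂μ) * (∫ x, Real.exp (∑ j, t j * x j) ∂ν) := by
    intro t
    rw [integral_map hmeas.aemeasurable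
      (Continuous.aestronglyMeasurable (by fun_prop)), ← integral_prod_mul]
    congr 1
    ext z
    simp [mul_add, Finset.sum_add_distrib, Real.exp_add]
  have hK : (fun t : Fin n → ℝ => Real.log (∫ x, Real.exp (∑ j, t j * x j)
      ∂((μ.prod ν).map (fun z => z.1 + z.2)))) =
      (fun t : Fin n → ℝ => Real.log (∫ x, Real.exp (∑ j, t j * x j) ∂μ)) +
      (fun t : Fin n → ℝ => Real.log (∫ x, Real.exp (∑ j, t j * x j) ∂ν)) := by
    ext t
    rw [hM, Real.log_mul (pμ t).ne' (pν t).ne']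
    rfl
  refine ⟨(μ.prod ν).map (fun z => z.1 + z.2),
    Measure.isProbabilityMeasure_map hmeas.aemeasurable, ?_, ?_, ?_⟩
  · intro t
    rw [hM]
    exact mul_pos (pμ t) (pν t)
  · rw [hK]
    exact cμ.add cν
  · ext i
    simp only [cumulantTensor, Pi.add_apply]
    rw [hK, iteratedFDeriv_add_apply cμ.contDiffAt cν.contDiffAt]
    rfl

lemma Realiz.base (m n : ℕ) (a : ℝ) (v : Fin n → ℝ) :
    Realiz (m+3) n (fun i => a * ∏ k, v (i k)) := by
  obtain ⟨p, hp, α, rfl⟩ := exists_scaled m a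
  have hM : ∀ t : Fin n → ℝ, ∫ x, Real.exp (∑ j, t j * x j) ∂(twoPt p (α • v)) =
      (1 - p) + p * Real.exp (∑ j, t j * (α • v) j) := by
    intro t
    rw [twoPt_integral hp]
    simp
  let g : (Fin n → ℝ) →L[ℝ] ℝ := ∑ j, (α • v) j • ContinuousLinearMap.proj j
  have hg : ∀ t, g t = ∑ j, t j * (α • v) j := by
    intro t
    simp only [g, ContinuousLinearMap.sum_apply, ContinuousLinearMap.smul_apply,
      ContinuousLinearMap.proj_apply, smul_eq_mul]
    exact Finset.sum_congr rfl fun j _ => mul_comm _ _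
  have hK : (fun t : Fin n → ℝ => Real.log (∫ x, Real.exp (∑ j, t j * x j)
      ∂(twoPt p (α • v)))) = bcgf p ∘ g := by
    ext t
    rw [hM, Function.comp, hg, bcgf]
  refine ⟨twoPt p (α • v), twoPt_prob hp _, ?_, ?_, ?_⟩
  · intro t
    rw [hM]
    exact bden_pos hp _
  · rw [hK]
    exact (bcgf_contDiff hp _).comp g.contDiff
  · ext i
    rw [cumulantTensor, hK, g.iteratedFDeriv_comp_right (bcgf_contDiff hp (m+3)) 0 le_rfl]
    rw [ContinuousMultilinearMap.compContinuousLinearMap_apply,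
      iteratedFDeriv_apply_eq_iteratedDeriv_mul_prod, map_zero, bcgf_iteratedDeriv_zero hp]
    have : ∀ k, g (Pi.single (i k) (1:ℝ)) = α * v (i k) := by
      intro k
      rw [hg]
      simp [Pi.single_apply]
    simp only [this, Finset.prod_mul_distrib, smul_eq_mul]
    simp
    ring

lemma perm_of_type {d n : ℕ} (i j : Fin d → Fin n)
    (h : (∑ k, Finsupp.single (i k) 1 : Fin n →₀ ℕ) = ∑ k, Finsupp.single (j k) 1) :
    ∃ σ : Equiv.Perm (Fin d), j ∘ σ = i := by
  classical
  have hc : ∀ c, Fintype.card {a // i a = c} = Fintype.card {a // j a = c} := by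
    intro c
    have := DFunLike.congr_fun h c
    simp only [Finsupp.finsetSum_apply, Finsupp.single_apply] at this
    rw [Fintype.card_subtype, Fintype.card_subtype, Finset.card_filter, Finset.card_filter]
    exact this
  refine ⟨Equiv.ofFiberEquiv (fun c => Fintype.equivOfCardEq (hc c)), ?_⟩
  funext a
  exact Equiv.ofFiberEquiv_map _ a

lemma mem_span_powers {d n : ℕ} (T : (Fin d → Fin n) → ℝ)
    (hT : ∀ (σ : Equiv.Perm (Fin d)) (i : Fin d → Fin n), T (i ∘ σ) = T i) :
    T ∈ Submodule.span ℝ (Set.range fun (v : Fin n → ℝ) (i : Fin d → Fin n) => ∏ k, v (i k)) := by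
  classical
  by_contra hcon
  obtain ⟨φ, hφT, hφ⟩ := Submodule.exists_le_ker_of_notMem hcon
  apply hφT
  set c : (Fin d → Fin n) → ℝ := fun i => φ (Pi.single i 1) with hc
  have hφe : ∀ f : (Fin d → Fin n) → ℝ, φ f = ∑ i, f i * c i := by
    intro f
    rw [LinearMap.pi_apply_eq_sum_univ φ f]
    refine Finset.sum_congr rfl fun i _ => ?_
    rw [smul_eq_mul, hc]
    congr 2
    ext j
    simp [Pi.single_apply, eq_comm]
  let ty : (Fin d → Fin n) → (Fin n →₀ ℕ) := fun i => ∑ k, Finsupp.single (i k) 1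
  have hP : (∑ i, MvPolynomial.monomial (ty i) (c i) : MvPolynomial (Fin n) ℝ) = 0 := by
    apply MvPolynomial.funext
    intro v
    have h0 : φ (fun i => ∏ k, v (i k)) = 0 := hφ (Submodule.subset_span ⟨v, rfl⟩)
    rw [hφe] at h0
    rw [map_sum, map_zero, ← h0]
    refine Finset.sum_congr rfl fun i _ => ?_
    have : MvPolynomial.monomial (ty i) (c i) =
        MvPolynomial.C (c i) * ∏ k, (MvPolynomial.X (i k) : MvPolynomial (Fin n) ℝ) := by
      simp only [MvPolynomial.X, ← MvPolynomial.monomial_sum_one, MvPolynomial.C_mul_monomial,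
        mul_one, ty]
    rw [this, map_mul, map_prod]
    simp [mul_comm]
  have hs : ∀ m, ∑ i with ty i = m, c i = 0 := by
    intro m
    have := congrArg (MvPolynomial.coeff m) hP
    simpa [MvPolynomial.coeff_sum, MvPolynomial.coeff_monomial, Finset.sum_filter] using this
  rw [hφe, ← Finset.sum_fiberwise_of_maps_to (s := Finset.univ) (t := Finset.univ.image ty)
    (g := ty) (fun i _ => Finset.mem_image_of_mem _ (Finset.mem_univ i))]
  refine Finset.sum_eq_zero fun m hm => ?_
  obtain ⟨j, -, rfl⟩ := Finset.mem_image.1 hm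
  have : ∑ i with ty i = ty j, T i * c i = ∑ i with ty i = ty j, T j * c i := by
    refine Finset.sum_congr rfl fun i hi => ?_
    obtain ⟨σ, rfl⟩ := perm_of_type i j (Finset.mem_filter.1 hi).2
    rw [hT]
  rw [this, ← Finset.mul_sum, hs, mul_zero]

lemma realiz_of_mem {m n : ℕ} (T : (Fin (m+3) → Fin n) → ℝ)
    (hT : T ∈ Submodule.span ℝ
      (Set.range fun (v : Fin n → ℝ) (i : Fin (m+3) → Fin n) => ∏ k, v (i k))) :
    ∀ a : ℝ, Realiz (m+3) n (a • T) := by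
  induction hT using Submodule.span_induction with
  | mem x hx =>
    obtain ⟨v, rfl⟩ := hx
    exact fun a => Realiz.base m n a v
  | zero =>
    intro a
    have := Realiz.base m n 0 0
    simp only [zero_mul] at this
    rw [smul_zero]
    exact this
  | add x y _ _ hx hy =>
    intro a
    rw [smul_add]
    exact (hx a).add (hy a)
  | smul b x _ hx =>
    intro a
    rw [smul_smul]
    exact hx _

/-- For every `d ≥ 3` and every real `c`, some probability distribution on `ℝ` has `d`-th
cumulant equal to `c`. Consequently, for `d ≥ 3` every symmetric tensor `T ∈ S^d(ℝ^n)`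
is the `d`-th cumulant tensor of some `ℝ^n`-valued random vector. -/
theorem cumulant_surjective :
    (∀ d : ℕ, 3 ≤ d → ∀ c : ℝ, ∃ μ : Measure ℝ,
      IsProbabilityMeasure μ ∧ cumulant1 d μ = c) ∧
    (∀ d : ℕ, 3 ≤ d → ∀ n : ℕ, ∀ T : (Fin d → Fin n) → ℝ,
      (∀ (σ : Equiv.Perm (Fin d)) (i : Fin d → Fin n), T (i ∘ σ) = T i) →
      ∃ μ : Measure (Fin n → ℝ), IsProbabilityMeasure μ ∧
        ∀ i : Fin d → Fin n, cumulantTensor d n μ i = T i) := by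
  refine ⟨?_, ?_⟩
  · intro d hd c
    obtain ⟨m, rfl⟩ := Nat.exists_eq_add_of_le' hd
    obtain ⟨p, hp, α, rfl⟩ := exists_scaled m c
    refine ⟨twoPt p α, twoPt_prob hp _, ?_⟩
    have hK : (fun t : ℝ => Real.log (∫ x, Real.exp (t * x) ∂(twoPt p α))) =
        fun t => bcgf p (α * t) := by
      ext t
      rw [twoPt_integral hp, bcgf]
      simp [mul_comm]
    rw [cumulant1, hK, iteratedDeriv_comp_const_mul (bcgf_contDiff hp (m+3))]
    simp [bcgf_iteratedDeriv_zero hp (m+2)]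
  · intro d hd n T hT
    obtain ⟨m, rfl⟩ := Nat.exists_eq_add_of_le' hd
    obtain ⟨μ, hμ, -, -, h⟩ := realiz_of_mem T (mem_span_powers T hT) 1
    refine ⟨μ, hμ, fun i => ?_⟩
    rw [h, one_smul]
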